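/- The quantum mutual information I(ρ_SA) = S(ρ_S) + S(ρ_A) − S(ρ_SA) is monotonically nonincreasing under local trace-preserving completely positive maps on the system: I((E ⊗ id)(ρ_SA)) ≤ I(ρ_SA). -/

import Mathlib

open Matrix
open scoped ComplexOrder

/-- The functional-calculus logarithm of a Hermitian matrix, restricted to its support
(eigenvalue `0` is sent to `0` since `Real.log 0 = 0`); junk value `0` off Hermitian. -/
noncomputable def matLog {n : Type*} [Fintype n] [DecidableEq n]
    (A : Matrix n n ℂ) : Matrix n n ℂ :=
  if h : A.IsHermitian then
    (h.eigenvectorUnitary : Matrix n n ℂ) *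
      Matrix.diagonal (fun i => (Real.log (h.eigenvalues i) : ℂ)) *
      (star h.eigenvectorUnitary : Matrix n n ℂ)
  else 0

/-- The von Neumann entropy `S(ρ) = −Tr(ρ log ρ)`. -/
noncomputable def vnEntropy {n : Type*} [Fintype n] [DecidableEq n]
    (ρ : Matrix n n ℂ) : ℝ :=
  -(((ρ * matLog ρ).trace).re)

/-- Partial trace over the second factor. -/
noncomputable def ptrA {m k : Type*} [Fintype m] [Fintype k]
    (M : Matrix (m × k) (m × k) ℂ) : Matrix m m ℂ :=
  Matrix.of fun a c => ∑ b, M (a, b) (c, b)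

/-- Partial trace over the first factor. -/
noncomputable def ptrB {m k : Type*} [Fintype m] [Fintype k]
    (M : Matrix (m × k) (m × k) ℂ) : Matrix k k ℂ :=
  Matrix.of fun b d => ∑ a, M (a, b) (a, d)

/-- Quantum mutual information `I(ρ_SA) = S(ρ_S) + S(ρ_A) − S(ρ_SA)`. -/
noncomputable def mutInfo {m k : ℕ} (M : Matrix (Fin m × Fin k) (Fin m × Fin k) ℂ) : ℝ :=
  vnEntropy (ptrA M) + vnEntropy (ptrB M) - vnEntropy M

/-- The extension `E ⊗ id` of a map `E` on the first tensor factor. -/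
noncomputable def tensorId {m k : Type*} [Fintype m] [Fintype k]
    (E : Matrix m m ℂ → Matrix m m ℂ) (M : Matrix (m × k) (m × k) ℂ) :
    Matrix (m × k) (m × k) ℂ :=
  Matrix.of fun p q => E (Matrix.of fun a c => M (a, p.2) (c, q.2)) p.1 q.1

/-!
Mutual information is the relative entropy `D(ρ ‖ ρ_S ⊗ ρ_A)`, and `E ⊗ id` sends `ρ_S ⊗ ρ_A` to
the product of the marginals of `(E ⊗ id) ρ`, so it suffices to prove the data-processing
inequality for `D`. The Nussbaum–Szkoła distributions `P`, `Q` of a pair `ρ`, `σ` turn `D(ρ ‖ σ)`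
into a classical divergence, which is the integral over `t` of `∑ P² / (Q + t P)` up to a divergent
term depending only on `Tr ρ`. For each `t` this sum is the maximum over all matrices `X` of
`2 Re Tr(Xρ) - Tr(X X* σ) - t Tr(X* X ρ)`. A trace-preserving completely positive map has Kraus
operators, so its dual `Φ` is unital and satisfies the Kadison–Schwarz inequality
`Φ(X) Φ(X)* ≤ Φ(X X*)`. Hence replacing `X` by `Φ(X)` and the two output states by the input ones
can only increase the functional, so every term of the integral decreases under the map.
-/

open Filter Topology
open scoped Kronecker MatrixOrder

section ClassicalDivergence

/-- `P` and `Q` are nonnegative families and `P` is absolutely continuous with respect to `Q`. -/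
structure IsAbsCont {ι : Type*} (P Q : ι → ℝ) : Prop where
  left_nonneg : ∀ x, 0 ≤ P x
  right_nonneg : ∀ x, 0 ≤ Q x
  eq_zero : ∀ x, Q x = 0 → P x = 0

variable {ι ι' : Type*} [Fintype ι] [Fintype ι']

/-- The Kullback–Leibler divergence of two finite families. It is `∞` in the literature when
`P` is not absolutely continuous with respect to `Q`, and has a junk value here. -/
noncomputable def klSum (P Q : ι → ℝ) : ℝ :=
  ∑ x, P x * Real.log (P x / Q x)

/-- The `f`-divergence `∑ P² / (Q + t P)`, whose integral over `t` is, up to a divergent term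
that only depends on `∑ P`, the Kullback–Leibler divergence. -/
noncomputable def resolventDiv (t : ℝ) (P Q : ι → ℝ) : ℝ :=
  ∑ x, P x ^ 2 / (Q x + t * P x)

/-- The integral of `resolventDiv t P Q` over `0 ≤ t ≤ T`, in closed form. -/
noncomputable def resolventDivIntegral (P Q : ι → ℝ) (T : ℝ) : ℝ :=
  ∑ x, P x * Real.log (1 + T * (P x / Q x))

lemma hasDerivAt_resolventDivIntegral {P Q : ι → ℝ} (h : IsAbsCont P Q) {T : ℝ} (hT : 0 ≤ T) :
    HasDerivAt (resolventDivIntegral P Q) (resolventDiv T P Q) T := by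
  refine HasDerivAt.fun_sum fun x _ => ?_
  obtain hQ | hQ := (h.right_nonneg x).eq_or_lt
  · simpa [h.eq_zero x hQ.symm] using hasDerivAt_const T (0 : ℝ)
  have hratio : 0 ≤ P x / Q x := div_nonneg (h.left_nonneg x) hQ.le
  have hpos : 0 < 1 + T * (P x / Q x) := by positivity
  have hlin : HasDerivAt (fun T => 1 + T * (P x / Q x)) (P x / Q x) T := by
    simpa using ((hasDerivAt_id T).mul_const (P x / Q x)).const_add 1
  have hslope : P x * (P x / Q x / (1 + T * (P x / Q x))) = P x ^ 2 / (Q x + T * P x) := by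
    have hden : Q x + T * P x = Q x * (1 + T * (P x / Q x)) := by field_simp
    rw [hden]
    field_simp
  exact hslope ▸ (hlin.log hpos.ne').const_mul (P x)

lemma tendsto_resolventDivIntegral_sub_log {P Q : ι → ℝ} (h : IsAbsCont P Q) :
    Tendsto (fun T => resolventDivIntegral P Q T - (∑ x, P x) * Real.log T) atTop
      (𝓝 (klSum P Q)) := by
  simp only [resolventDivIntegral, klSum, Finset.sum_mul, ← Finset.sum_sub_distrib]
  refine tendsto_finsetSum _ fun x _ => ?_
  obtain hP | hP := (h.left_nonneg x).eq_or_lt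
  · simp [← hP]
  have hQ : 0 < Q x := (h.right_nonneg x).lt_of_ne' fun hQ => hP.ne' (h.eq_zero x hQ)
  have hratio : 0 < P x / Q x := div_pos hP hQ
  have hlim : Tendsto (fun T : ℝ => T⁻¹ + P x / Q x) atTop (𝓝 (P x / Q x)) := by
    simpa using tendsto_inv_atTop_zero.add_const (P x / Q x)
  refine ((hlim.log hratio.ne').const_mul (P x)).congr' ?_
  filter_upwards [eventually_gt_atTop 0] with T hT
  have hsplit : T⁻¹ + P x / Q x = (1 + T * (P x / Q x)) / T := by field_simp
  rw [hsplit, Real.log_div (by positivity) hT.ne', mul_sub]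

lemma resolventDivIntegral_le_of_resolventDiv_le {P Q : ι → ℝ} {P' Q' : ι' → ℝ}
    (h : IsAbsCont P Q) (h' : IsAbsCont P' Q')
    (hle : ∀ t, 0 < t → resolventDiv t P' Q' ≤ resolventDiv t P Q) {T : ℝ} (hT : 0 ≤ T) :
    resolventDivIntegral P' Q' T ≤ resolventDivIntegral P Q T := by
  have hderiv {t : ℝ} (ht : 0 ≤ t) :
      HasDerivAt (fun t => resolventDivIntegral P Q t - resolventDivIntegral P' Q' t)
        (resolventDiv t P Q - resolventDiv t P' Q') t :=
    (hasDerivAt_resolventDivIntegral h ht).sub (hasDerivAt_resolventDivIntegral h' ht)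
  have hmono : MonotoneOn (fun t => resolventDivIntegral P Q t - resolventDivIntegral P' Q' t)
      (Set.Ici 0) := by
    refine monotoneOn_of_hasDerivWithinAt_nonneg (convex_Ici 0)
      (fun t ht => (hderiv ht).continuousAt.continuousWithinAt)
      (fun t ht => (hderiv (interior_subset ht)).hasDerivWithinAt) fun t ht => ?_
    rw [interior_Ici] at ht
    exact sub_nonneg.2 (hle t ht)
  have hzero := hmono Set.self_mem_Ici hT hT
  simpa [resolventDivIntegral] using hzero

theorem klSum_le_of_resolventDiv_le {P Q : ι → ℝ} {P' Q' : ι' → ℝ}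
    (h : IsAbsCont P Q) (h' : IsAbsCont P' Q') (hsum : ∑ x, P' x = ∑ x, P x)
    (hle : ∀ t, 0 < t → resolventDiv t P' Q' ≤ resolventDiv t P Q) :
    klSum P' Q' ≤ klSum P Q := by
  refine le_of_tendsto_of_tendsto (tendsto_resolventDivIntegral_sub_log h')
    (tendsto_resolventDivIntegral_sub_log h) ?_
  filter_upwards [eventually_ge_atTop 0] with T hT
  rw [hsum]
  exact sub_le_sub_right (resolventDivIntegral_le_of_resolventDiv_le h h' hle hT) _

end ClassicalDivergence

section SpectralMatrix

variable {n : Type*} [Fintype n] [DecidableEq n]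

/-- The Hermitian matrix whose eigenvectors are the columns of `U`, with eigenvalues `p`. -/
noncomputable def spectralMatrix (U : unitaryGroup n ℂ) (p : n → ℝ) : Matrix n n ℂ :=
  (U : Matrix n n ℂ) * diagonal (fun i => (p i : ℂ)) * star (U : Matrix n n ℂ)

lemma spectralMatrix_mul (U : unitaryGroup n ℂ) (p : n → ℝ) :
    spectralMatrix U p * (U : Matrix n n ℂ) =
      (U : Matrix n n ℂ) * diagonal fun i => (p i : ℂ) := by
  simp [spectralMatrix, Matrix.mul_assoc]

lemma star_mul_spectralMatrix (U : unitaryGroup n ℂ) (p : n → ℝ) :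
    star (U : Matrix n n ℂ) * spectralMatrix U p =
      diagonal (fun i => (p i : ℂ)) * star (U : Matrix n n ℂ) := by
  simp [spectralMatrix, ← Matrix.mul_assoc]

lemma star_mul_spectralMatrix_mul (U : unitaryGroup n ℂ) (p : n → ℝ) :
    star (U : Matrix n n ℂ) * spectralMatrix U p * (U : Matrix n n ℂ) =
      diagonal fun i => (p i : ℂ) := by
  simp [star_mul_spectralMatrix, Matrix.mul_assoc]

lemma eq_spectralMatrix {A : Matrix n n ℂ} (hA : A.IsHermitian) :
    A = spectralMatrix hA.eigenvectorUnitary hA.eigenvalues :=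
  hA.spectral_theorem

lemma exists_eq_spectralMatrix {A : Matrix n n ℂ} (hA : A.PosSemidef) :
    ∃ (U : unitaryGroup n ℂ) (p : n → ℝ), (∀ i, 0 ≤ p i) ∧ A = spectralMatrix U p :=
  ⟨_, _, hA.eigenvalues_nonneg, eq_spectralMatrix hA.isHermitian⟩

lemma isHermitian_spectralMatrix (U : unitaryGroup n ℂ) (p : n → ℝ) :
    (spectralMatrix U p).IsHermitian := by
  refine isHermitian_mul_mul_conjTranspose (U : Matrix n n ℂ) ?_
  exact isHermitian_diagonal_of_self_adjoint _ (funext fun i => Complex.conj_ofReal (p i))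

-- The intertwiner `W* U` only links eigenvectors with equal eigenvalues.
lemma spectralMatrix_comp_congr {U W : unitaryGroup n ℂ} {p q : n → ℝ}
    (h : spectralMatrix U p = spectralMatrix W q) (f : ℝ → ℝ) :
    spectralMatrix U (f ∘ p) = spectralMatrix W (f ∘ q) := by
  have intertwine (r s : n → ℝ) : spectralMatrix U r = spectralMatrix W s ↔
      star (W : Matrix n n ℂ) * U * diagonal (fun i => (r i : ℂ)) =
        diagonal (fun i => (s i : ℂ)) * (star (W : Matrix n n ℂ) * U) := by
    rw [Matrix.mul_assoc, ← spectralMatrix_mul, ← Matrix.mul_assoc, ← Matrix.mul_assoc,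
      ← star_mul_spectralMatrix]
    refine ⟨fun h => by rw [h], fun h => ?_⟩
    simpa [Matrix.mul_assoc, ← Matrix.mul_assoc (W : Matrix n n ℂ)] using
      congr_arg (fun M => (W : Matrix n n ℂ) * (M * star (U : Matrix n n ℂ))) h
  rw [intertwine] at h ⊢
  ext j i
  have hji := congr_fun₂ h j i
  simp only [mul_diagonal, diagonal_mul, Function.comp_apply] at hji ⊢
  by_cases hg : (star (W : Matrix n n ℂ) * U) j i = 0
  · simp [hg]
  · have hpq : p i = q j := by
      rw [mul_comm] at hji
      exact_mod_cast mul_right_cancel₀ hg hji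
    rw [hpq, mul_comm]

lemma matLog_spectralMatrix (U : unitaryGroup n ℂ) (p : n → ℝ) :
    matLog (spectralMatrix U p) = spectralMatrix U (Real.log ∘ p) := by
  have hA := isHermitian_spectralMatrix U p
  rw [matLog, dif_pos hA]
  exact spectralMatrix_comp_congr (eq_spectralMatrix hA).symm Real.log

lemma re_trace_mul_spectralMatrix (A : Matrix n n ℂ) (U : unitaryGroup n ℂ) (p : n → ℝ) :
    (A * spectralMatrix U p).trace.re =
      ∑ i, ((star (U : Matrix n n ℂ) * A * (U : Matrix n n ℂ)) i i).re * p i := by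
  have hcycle : (A * spectralMatrix U p).trace =
      (star (U : Matrix n n ℂ) * A * U * diagonal (fun i => (p i : ℂ))).trace := by
    rw [spectralMatrix, ← Matrix.mul_assoc, trace_mul_comm]
    simp only [Matrix.mul_assoc]
  rw [hcycle]
  simp [Matrix.trace, mul_diagonal]

lemma re_trace_spectralMatrix_mul_matLog (U : unitaryGroup n ℂ) (p : n → ℝ) :
    (spectralMatrix U p * matLog (spectralMatrix U p)).trace.re = ∑ i, p i * Real.log (p i) := by
  simp [matLog_spectralMatrix, re_trace_mul_spectralMatrix, star_mul_spectralMatrix_mul]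

lemma eq_zero_col_of_diag_eq_zero {A : Matrix n n ℂ} (hA : A.PosSemidef) {j : n}
    (hj : A j j = 0) : A *ᵥ Pi.single j 1 = 0 := by
  refine (hA.dotProduct_mulVec_zero_iff _).1 ?_
  simp [hj]

theorem ker_spectralMatrix_le_ker_iff {ρ : Matrix n n ℂ} (hρ : ρ.PosSemidef)
    (W : unitaryGroup n ℂ) (q : n → ℝ) :
    LinearMap.ker (spectralMatrix W q).mulVecLin ≤ LinearMap.ker ρ.mulVecLin ↔
      ∀ j, q j = 0 → (star (W : Matrix n n ℂ) * ρ * (W : Matrix n n ℂ)) j j = 0 := by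
  set τ := star (W : Matrix n n ℂ) * ρ * (W : Matrix n n ℂ) with hτ
  constructor
  · intro hker j hj
    have hσ : spectralMatrix W q *ᵥ ((W : Matrix n n ℂ) *ᵥ Pi.single j 1) = 0 := by
      rw [mulVec_mulVec, spectralMatrix_mul, ← mulVec_mulVec]
      simp [hj]
    have hρ0 : ρ *ᵥ ((W : Matrix n n ℂ) *ᵥ Pi.single j 1) = 0 := hker hσ
    have hcol : τ *ᵥ Pi.single j 1 = 0 := by
      rw [hτ, Matrix.mul_assoc, ← mulVec_mulVec, ← mulVec_mulVec, hρ0, mulVec_zero]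
    simpa using congr_fun hcol j
  · intro hdiag v hv
    have hτpos : τ.PosSemidef := hρ.conjTranspose_mul_mul_same (W : Matrix n n ℂ)
    have hcoord (j : n) : (q j : ℂ) * (star (W : Matrix n n ℂ) *ᵥ v) j = 0 := by
      refine (mulVec_diagonal (fun i => (q i : ℂ)) _ j).symm.trans ?_
      rw [mulVec_mulVec, ← star_mul_spectralMatrix, ← mulVec_mulVec,
        show spectralMatrix W q *ᵥ v = 0 from hv, mulVec_zero, Pi.zero_apply]
    have hτv : τ *ᵥ (star (W : Matrix n n ℂ) *ᵥ v) = 0 := by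
      rw [← Finset.univ_sum_single (star (W : Matrix n n ℂ) *ᵥ v), mulVec_sum]
      refine Finset.sum_eq_zero fun j _ => ?_
      obtain hq | hv := mul_eq_zero.1 (hcoord j)
      · rw [← mul_one ((star (W : Matrix n n ℂ) *ᵥ v) j), ← smul_eq_mul, Pi.single_smul,
          mulVec_smul, eq_zero_col_of_diag_eq_zero hτpos (hdiag j (by exact_mod_cast hq)),
          smul_zero]
      · rw [hv, Pi.single_zero, mulVec_zero]
    have hWτ : ρ *ᵥ v = (W : Matrix n n ℂ) *ᵥ (τ *ᵥ (star (W : Matrix n n ℂ) *ᵥ v)) := by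
      simp [hτ, Matrix.mul_assoc, ← Matrix.mul_assoc (W : Matrix n n ℂ)]
    exact hWτ.trans (by rw [hτv, mulVec_zero])

end SpectralMatrix

section RelativeEntropy

variable {n : Type*} [Fintype n] [DecidableEq n]

/-- The relative entropy `D(ρ ‖ σ) = Tr ρ (log ρ - log σ)`. It is `∞` in the literature unless
`ker σ ≤ ker ρ`, and has a junk value here. -/
noncomputable def relEntropy (ρ σ : Matrix n n ℂ) : ℝ :=
  ((ρ * (matLog ρ - matLog σ)).trace).re

/-- The transition probability `|⟨w_j, u_i⟩|²` between the columns of two unitary matrices. -/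
noncomputable def overlap (U W : unitaryGroup n ℂ) (j i : n) : ℝ :=
  Complex.normSq ((star (W : Matrix n n ℂ) * U) j i)

/-- The first Nussbaum–Szkoła distribution of the pair `spectralMatrix U p`,
`spectralMatrix W q`. -/
noncomputable def nussbaumSzkolaLeft (U W : unitaryGroup n ℂ) (p : n → ℝ) (x : n × n) : ℝ :=
  overlap U W x.1 x.2 * p x.2

/-- The second Nussbaum–Szkoła distribution of the pair `spectralMatrix U p`,
`spectralMatrix W q`. -/
noncomputable def nussbaumSzkolaRight (U W : unitaryGroup n ℂ) (q : n → ℝ) (x : n × n) : ℝ :=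
  overlap U W x.1 x.2 * q x.1

lemma overlap_nonneg (U W : unitaryGroup n ℂ) (j i : n) : 0 ≤ overlap U W j i :=
  Complex.normSq_nonneg _

lemma sum_overlap (U W : unitaryGroup n ℂ) (i : n) : ∑ j, overlap U W j i = 1 := by
  have hdiag := congr_fun₂ (Unitary.coe_star_mul_self (star W * U)) i i
  rw [one_apply_eq, mul_apply] at hdiag
  exact_mod_cast (Finset.sum_congr rfl fun j _ => Complex.normSq_eq_conj_mul_self).trans hdiag

lemma re_star_mul_spectralMatrix_mul_diag (U W : unitaryGroup n ℂ) (p : n → ℝ) (j : n) :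
    ((star (W : Matrix n n ℂ) * spectralMatrix U p * (W : Matrix n n ℂ)) j j).re =
      ∑ i, overlap U W j i * p i := by
  have hconj : star (W : Matrix n n ℂ) * spectralMatrix U p * (W : Matrix n n ℂ) =
      star (W : Matrix n n ℂ) * U * diagonal (fun i => (p i : ℂ)) *
        star (star (W : Matrix n n ℂ) * U) := by
    simp [spectralMatrix, Matrix.mul_assoc]
  rw [hconj, mul_apply, Complex.re_sum]
  refine Finset.sum_congr rfl fun i _ => ?_
  rw [mul_diagonal, star_apply, mul_right_comm, ← starRingEnd_apply, Complex.mul_conj,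
    ← Complex.ofReal_mul, Complex.ofReal_re, overlap]

lemma sum_nussbaumSzkolaLeft (U W : unitaryGroup n ℂ) (p : n → ℝ) :
    ∑ x, nussbaumSzkolaLeft U W p x = (spectralMatrix U p).trace.re := by
  have htrace : (spectralMatrix U p).trace.re = ∑ i, p i := by
    simpa using re_trace_mul_spectralMatrix 1 U p
  rw [htrace, Fintype.sum_prod_type_right]
  simp [nussbaumSzkolaLeft, ← Finset.sum_mul, sum_overlap]

lemma isAbsCont_nussbaumSzkola {U W : unitaryGroup n ℂ} {p q : n → ℝ} (hp : ∀ i, 0 ≤ p i)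
    (hq : ∀ j, 0 ≤ q j) (hρ : (spectralMatrix U p).PosSemidef)
    (hker : LinearMap.ker (spectralMatrix W q).mulVecLin ≤
      LinearMap.ker (spectralMatrix U p).mulVecLin) :
    IsAbsCont (nussbaumSzkolaLeft U W p) (nussbaumSzkolaRight U W q) where
  left_nonneg x := mul_nonneg (overlap_nonneg ..) (hp _)
  right_nonneg x := mul_nonneg (overlap_nonneg ..) (hq _)
  eq_zero x hx := by
    obtain hov | hqx := mul_eq_zero.1 hx
    · simp [nussbaumSzkolaLeft, hov]
    · have hdiag := re_star_mul_spectralMatrix_mul_diag U W p x.1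
      rw [(ker_spectralMatrix_le_ker_iff hρ W q).1 hker _ hqx, Complex.zero_re, eq_comm,
        Finset.sum_eq_zero_iff_of_nonneg fun i _ => mul_nonneg (overlap_nonneg ..) (hp i)] at hdiag
      exact hdiag x.2 (Finset.mem_univ _)

lemma relEntropy_spectralMatrix {U W : unitaryGroup n ℂ} {p q : n → ℝ}
    (h : IsAbsCont (nussbaumSzkolaLeft U W p) (nussbaumSzkolaRight U W q)) :
    relEntropy (spectralMatrix U p) (spectralMatrix W q) =
      klSum (nussbaumSzkolaLeft U W p) (nussbaumSzkolaRight U W q) := by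
  have hlog (x : n × n) :
      nussbaumSzkolaLeft U W p x *
          Real.log (nussbaumSzkolaLeft U W p x / nussbaumSzkolaRight U W q x) =
        nussbaumSzkolaLeft U W p x * Real.log (p x.2) -
          nussbaumSzkolaLeft U W p x * Real.log (q x.1) := by
    by_cases hP : nussbaumSzkolaLeft U W p x = 0
    · simp [hP]
    have hQ : nussbaumSzkolaRight U W q x ≠ 0 := mt (h.eq_zero x) hP
    rw [← mul_sub, nussbaumSzkolaLeft, nussbaumSzkolaRight,
      mul_div_mul_left _ _ (left_ne_zero_of_mul hP),
      Real.log_div (right_ne_zero_of_mul hP) (right_ne_zero_of_mul hQ)]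
  have hleft : (spectralMatrix U p * matLog (spectralMatrix U p)).trace.re =
      ∑ x, nussbaumSzkolaLeft U W p x * Real.log (p x.2) := by
    rw [re_trace_spectralMatrix_mul_matLog, Fintype.sum_prod_type_right]
    simp [nussbaumSzkolaLeft, ← Finset.sum_mul, sum_overlap]
  have hright : (spectralMatrix U p * matLog (spectralMatrix W q)).trace.re =
      ∑ x, nussbaumSzkolaLeft U W p x * Real.log (q x.1) := by
    rw [matLog_spectralMatrix, re_trace_mul_spectralMatrix, Fintype.sum_prod_type]
    simp [nussbaumSzkolaLeft, ← Finset.sum_mul, re_star_mul_spectralMatrix_mul_diag]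
  rw [relEntropy, mul_sub, trace_sub, Complex.sub_re, hleft, hright, klSum,
    ← Finset.sum_sub_distrib]
  exact Finset.sum_congr rfl fun x _ => (hlog x).symm

end RelativeEntropy

section ResolventForm

variable {n : Type*} [Fintype n]

/-- The concave quadratic functional of `X` whose maximum, for a pair `ρ`, `σ`, is the
`resolventDiv` of their Nussbaum–Szkoła distributions. -/
noncomputable def resolventForm (t : ℝ) (ρ σ X : Matrix n n ℂ) : ℝ :=
  2 * (X * ρ).trace.re - (X * Xᴴ * σ).trace.re - t * (Xᴴ * X * ρ).trace.re

lemma re_conjTranspose_mul_self_diag (A : Matrix n n ℂ) (i : n) :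
    ((Aᴴ * A) i i).re = ∑ j, Complex.normSq (A j i) := by
  simp [mul_apply, ← Complex.normSq_eq_conj_mul_self]

lemma re_mul_conjTranspose_self_diag (A : Matrix n n ℂ) (j : n) :
    ((A * Aᴴ) j j).re = ∑ i, Complex.normSq (A j i) := by
  simp [mul_apply, Complex.mul_conj]

variable [DecidableEq n]

lemma resolventForm_spectralMatrix (t : ℝ) (U W : unitaryGroup n ℂ) (p q : n → ℝ)
    (X : Matrix n n ℂ) :
    resolventForm t (spectralMatrix U p) (spectralMatrix W q) X =
      ∑ a : n × n, (2 * p a.2 * (star ((star (W : Matrix n n ℂ) * U) a.1 a.2) *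
          (star (W : Matrix n n ℂ) * X * U) a.1 a.2).re -
        (q a.1 + t * p a.2) * Complex.normSq ((star (W : Matrix n n ℂ) * X * U) a.1 a.2)) := by
  set x := star (W : Matrix n n ℂ) * X * U with hx
  have hlin (i : n) : ((star (U : Matrix n n ℂ) * X * U) i i).re =
      ∑ j, (star ((star (W : Matrix n n ℂ) * U) j i) * x j i).re := by
    have hconj : star (U : Matrix n n ℂ) * X * U =
        (star (W : Matrix n n ℂ) * (U : Matrix n n ℂ))ᴴ * x := by
      simp [hx, Matrix.mul_assoc, ← star_eq_conjTranspose, ← Matrix.mul_assoc (W : Matrix n n ℂ)]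
    rw [hconj, mul_apply, Complex.re_sum]
    rfl
  have hleft : star (W : Matrix n n ℂ) * (X * Xᴴ) * W = x * xᴴ := by
    simp [hx, Matrix.mul_assoc, ← star_eq_conjTranspose, ← Matrix.mul_assoc (U : Matrix n n ℂ)]
  have hright : star (U : Matrix n n ℂ) * (Xᴴ * X) * U = xᴴ * x := by
    simp [hx, Matrix.mul_assoc, ← star_eq_conjTranspose, ← Matrix.mul_assoc (W : Matrix n n ℂ)]
  simp only [resolventForm, re_trace_mul_spectralMatrix, hlin, hleft, hright,
    re_conjTranspose_mul_self_diag, re_mul_conjTranspose_self_diag, Finset.sum_mul,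
    Finset.mul_sum, Fintype.sum_prod_type_right]
  rw [Finset.sum_comm (f := fun j i => Complex.normSq (x j i) * q j)]
  simp only [← Finset.sum_sub_distrib]
  exact Finset.sum_congr rfl fun i _ => Finset.sum_congr rfl fun j _ => by ring

lemma two_mul_re_sub_eq_sub_normSq {p q t : ℝ} (h : q + t * p = 0 → p = 0) (g x : ℂ) :
    2 * p * (star g * x).re - (q + t * p) * Complex.normSq x =
      (Complex.normSq g * p) ^ 2 / (Complex.normSq g * q + t * (Complex.normSq g * p)) -
        (q + t * p) * Complex.normSq (x - (p / (q + t * p) : ℝ) * g) := by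
  by_cases hd : q + t * p = 0
  · simp [h hd]
  obtain rfl | hg := eq_or_ne g 0
  · simp
  have hG : Complex.normSq g ≠ 0 := Complex.normSq_eq_zero.not.2 hg
  have hfrac : (Complex.normSq g * p) ^ 2 /
      (Complex.normSq g * q + t * (Complex.normSq g * p)) =
        Complex.normSq g * p * (p / (q + t * p)) := by
    rw [show Complex.normSq g * q + t * (Complex.normSq g * p) =
      Complex.normSq g * (q + t * p) by ring]
    field_simp
  have hp : p = p / (q + t * p) * (q + t * p) := (div_mul_cancel₀ p hd).symm
  rw [hfrac]
  generalize p / (q + t * p) = c at hp ⊢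
  generalize q + t * p = d at hp ⊢
  rw [hp]
  simp only [Complex.normSq_apply, Complex.sub_re, Complex.sub_im, Complex.mul_re,
    Complex.mul_im, Complex.ofReal_re, Complex.ofReal_im, Complex.star_def, Complex.conj_re,
    Complex.conj_im]
  ring

theorem isGreatest_range_resolventForm {U W : unitaryGroup n ℂ} {p q : n → ℝ} {t : ℝ}
    (hp : ∀ i, 0 ≤ p i) (hq : ∀ j, 0 ≤ q j) (ht : 0 < t) :
    IsGreatest (Set.range (resolventForm t (spectralMatrix U p) (spectralMatrix W q)))
      (resolventDiv t (nussbaumSzkolaLeft U W p) (nussbaumSzkolaRight U W q)) := by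
  set g := star (W : Matrix n n ℂ) * U
  have hpos (j i : n) : 0 ≤ q j + t * p i := add_nonneg (hq j) (mul_nonneg ht.le (hp i))
  have hzero (j i : n) (h : q j + t * p i = 0) : p i = 0 := by
    nlinarith [hp i, hq j]
  have hsquare (X : Matrix n n ℂ) :
      resolventForm t (spectralMatrix U p) (spectralMatrix W q) X =
        resolventDiv t (nussbaumSzkolaLeft U W p) (nussbaumSzkolaRight U W q) -
          ∑ a : n × n, (q a.1 + t * p a.2) * Complex.normSq
            ((star (W : Matrix n n ℂ) * X * U) a.1 a.2 -
              (p a.2 / (q a.1 + t * p a.2) : ℝ) * g a.1 a.2) := by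
    rw [resolventForm_spectralMatrix, resolventDiv, ← Finset.sum_sub_distrib]
    exact Finset.sum_congr rfl fun a _ => two_mul_re_sub_eq_sub_normSq (hzero a.1 a.2) _ _
  refine ⟨⟨(W : Matrix n n ℂ) * of (fun j i => ((p i / (q j + t * p i) : ℝ) : ℂ) * g j i) *
    star (U : Matrix n n ℂ), ?_⟩, ?_⟩
  · rw [hsquare]
    simp [Matrix.mul_assoc, ← Matrix.mul_assoc (star (W : Matrix n n ℂ))]
  · rintro _ ⟨X, rfl⟩
    rw [hsquare]
    exact sub_le_self _ <| Finset.sum_nonneg fun a _ =>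
      mul_nonneg (hpos _ _) (Complex.normSq_nonneg _)

end ResolventForm

theorem exists_nussbaumSzkola {n : Type*} [Fintype n] [DecidableEq n] {ρ σ : Matrix n n ℂ}
    (hρ : ρ.PosSemidef) (hσ : σ.PosSemidef)
    (hker : LinearMap.ker σ.mulVecLin ≤ LinearMap.ker ρ.mulVecLin) :
    ∃ P Q : n × n → ℝ, IsAbsCont P Q ∧ ∑ x, P x = ρ.trace.re ∧ relEntropy ρ σ = klSum P Q ∧
      ∀ t, 0 < t → IsGreatest (Set.range (resolventForm t ρ σ)) (resolventDiv t P Q) := by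
  obtain ⟨U, p, hp, rfl⟩ := exists_eq_spectralMatrix hρ
  obtain ⟨W, q, hq, rfl⟩ := exists_eq_spectralMatrix hσ
  have hac := isAbsCont_nussbaumSzkola hp hq hρ hker
  exact ⟨_, _, hac, sum_nussbaumSzkolaLeft U W p, relEntropy_spectralMatrix hac,
    fun t ht => isGreatest_range_resolventForm hp hq ht⟩

section KrausMap

variable {m n ι : Type*} [Fintype n] [Fintype ι]

/-- The completely positive map `A ↦ ∑ₐ Kₐ A Kₐ*` with Kraus operators `K`. Its dual for the trace
pairing has Kraus operators `Kₐ*`. -/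
noncomputable def krausMap (K : ι → Matrix m n ℂ) : Matrix n n ℂ →ₗ[ℂ] Matrix m m ℂ where
  toFun A := ∑ a, K a * A * (K a)ᴴ
  map_add' A B := by simp [Matrix.mul_add, Matrix.add_mul, Finset.sum_add_distrib]
  map_smul' c A := by simp [Finset.smul_sum]

lemma krausMap_apply (K : ι → Matrix m n ℂ) (A : Matrix n n ℂ) :
    krausMap K A = ∑ a, K a * A * (K a)ᴴ :=
  rfl

lemma conjTranspose_krausMap (K : ι → Matrix m n ℂ) (A : Matrix n n ℂ) :
    (krausMap K A)ᴴ = krausMap K Aᴴ := by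
  simp [krausMap_apply, conjTranspose_sum, Matrix.mul_assoc]

lemma posSemidef_krausMap [Finite m] (K : ι → Matrix m n ℂ) {A : Matrix n n ℂ}
    (hA : A.PosSemidef) : (krausMap K A).PosSemidef := by
  have := Fintype.ofFinite m
  exact posSemidef_sum _ fun a _ => hA.mul_mul_conjTranspose_same (K a)

variable [Fintype m]

lemma trace_mul_krausMap (K : ι → Matrix m n ℂ) (Z : Matrix m m ℂ) (A : Matrix n n ℂ) :
    (Z * krausMap K A).trace = (krausMap (fun a => (K a)ᴴ) Z * A).trace := by
  simp only [krausMap_apply, Finset.mul_sum, Finset.sum_mul, trace_sum, conjTranspose_conjTranspose]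
  refine Finset.sum_congr rfl fun a _ => ?_
  rw [← Matrix.mul_assoc, trace_mul_comm]
  simp only [Matrix.mul_assoc]

lemma krausMap_mulVec_eq_zero_iff (K : ι → Matrix m n ℂ) {A : Matrix n n ℂ} (hA : A.PosSemidef)
    (v : m → ℂ) : krausMap K A *ᵥ v = 0 ↔ ∀ a, A *ᵥ ((K a)ᴴ *ᵥ v) = 0 := by
  have hform (a : ι) : star v ⬝ᵥ (K a * A * (K a)ᴴ) *ᵥ v =
      star ((K a)ᴴ *ᵥ v) ⬝ᵥ A *ᵥ ((K a)ᴴ *ᵥ v) := by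
    rw [star_mulVec, conjTranspose_conjTranspose, ← dotProduct_mulVec, mulVec_mulVec,
      mulVec_mulVec, Matrix.mul_assoc]
  rw [← (posSemidef_krausMap K hA).dotProduct_mulVec_zero_iff, krausMap_apply, sum_mulVec,
    dotProduct_sum, Finset.sum_eq_zero_iff_of_nonneg fun a _ => by
      rw [hform]; exact hA.dotProduct_mulVec_nonneg _]
  simp only [Finset.mem_univ, true_imp_iff, hform, hA.dotProduct_mulVec_zero_iff]

lemma ker_krausMap_le (K : ι → Matrix m n ℂ) {ρ σ : Matrix n n ℂ} (hρ : ρ.PosSemidef)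
    (hσ : σ.PosSemidef) (hker : LinearMap.ker σ.mulVecLin ≤ LinearMap.ker ρ.mulVecLin) :
    LinearMap.ker (krausMap K σ).mulVecLin ≤ LinearMap.ker (krausMap K ρ).mulVecLin := by
  intro v hv
  rw [LinearMap.mem_ker, mulVecLin_apply, krausMap_mulVec_eq_zero_iff K ‹_›] at hv ⊢
  exact fun a => hker (hv a)

lemma trace_krausMap_eq_iff [DecidableEq n] (K : ι → Matrix m n ℂ) :
    (∀ A, (krausMap K A).trace = A.trace) ↔ ∑ a, (K a)ᴴ * K a = 1 := by
  classical
  have hdual (A : Matrix n n ℂ) : (krausMap K A).trace = ((∑ a, (K a)ᴴ * K a) * A).trace := by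
    simpa [krausMap_apply] using trace_mul_krausMap K 1 A
  rw [ext_iff_trace_mul_right]
  simp only [hdual, Matrix.one_mul]

-- Kadison–Schwarz: the difference is `∑ₐ (Lₐ Z - Φ(Z) Lₐ) (Lₐ Z - Φ(Z) Lₐ)*`.
lemma posSemidef_krausMap_mul_conjTranspose_sub [DecidableEq m] {L : ι → Matrix m n ℂ}
    (hL : ∑ a, L a * (L a)ᴴ = 1) (Z : Matrix n n ℂ) :
    (krausMap L (Z * Zᴴ) - krausMap L Z * (krausMap L Z)ᴴ).PosSemidef := by
  set X := krausMap L Z with hX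
  have hexpand (a : ι) : (L a * Z - X * L a) * (L a * Z - X * L a)ᴴ =
      L a * (Z * Zᴴ) * (L a)ᴴ - L a * Z * (L a)ᴴ * Xᴴ - X * (L a * Z * (L a)ᴴ)ᴴ +
        X * (L a * (L a)ᴴ) * Xᴴ := by
    simp only [conjTranspose_mul, conjTranspose_sub, conjTranspose_conjTranspose, Matrix.sub_mul,
      Matrix.mul_sub, Matrix.mul_assoc]
    abel
  have hsquares : ∑ a, (L a * Z - X * L a) * (L a * Z - X * L a)ᴴ =
      krausMap L (Z * Zᴴ) - X * Xᴴ := by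
    simp only [hexpand, Finset.sum_add_distrib, Finset.sum_sub_distrib, ← Finset.sum_mul,
      ← Finset.mul_sum, ← conjTranspose_sum, hL, ← krausMap_apply, ← hX]
    noncomm_ring
  exact hsquares ▸ posSemidef_sum _ fun a _ => posSemidef_self_mul_conjTranspose _

lemma re_trace_mul_nonneg {A B : Matrix n n ℂ} (hA : A.PosSemidef) (hB : B.PosSemidef) :
    0 ≤ (A * B).trace.re := by
  classical
  obtain ⟨C, rfl⟩ := CStarAlgebra.nonneg_iff_eq_star_mul_self.1 hA.nonneg
  rw [Matrix.mul_assoc, trace_mul_comm]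
  exact (Complex.le_def.1 (hB.mul_mul_conjTranspose_same C).trace_nonneg).1

lemma re_trace_krausMap_mul_le [DecidableEq m] {L : ι → Matrix m n ℂ}
    (hL : ∑ a, L a * (L a)ᴴ = 1) (Z : Matrix n n ℂ) {τ : Matrix m m ℂ} (hτ : τ.PosSemidef) :
    (krausMap L Z * (krausMap L Z)ᴴ * τ).trace.re ≤ (krausMap L (Z * Zᴴ) * τ).trace.re := by
  rw [← sub_nonneg, ← Complex.sub_re, ← trace_sub, ← Matrix.sub_mul]
  exact re_trace_mul_nonneg (posSemidef_krausMap_mul_conjTranspose_sub hL Z) hτ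

theorem resolventForm_krausMap_le [DecidableEq n] {K : ι → Matrix m n ℂ}
    (hK : ∑ a, (K a)ᴴ * K a = 1) {ρ σ : Matrix n n ℂ} (hρ : ρ.PosSemidef) (hσ : σ.PosSemidef)
    {t : ℝ} (ht : 0 ≤ t) (Y : Matrix m m ℂ) :
    resolventForm t (krausMap K ρ) (krausMap K σ) Y ≤
      resolventForm t ρ σ (krausMap (fun a => (K a)ᴴ) Y) := by
  have hL : ∑ a, (K a)ᴴ * (K a)ᴴᴴ = 1 := by simpa using hK
  have hYσ := re_trace_krausMap_mul_le hL Y hσ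
  have hYρ := re_trace_krausMap_mul_le hL Yᴴ hρ
  rw [conjTranspose_conjTranspose, ← conjTranspose_krausMap, conjTranspose_conjTranspose] at hYρ
  simp only [resolventForm, trace_mul_krausMap]
  linarith [mul_le_mul_of_nonneg_left hYρ ht]

theorem relEntropy_krausMap_le [DecidableEq m] [DecidableEq n] {K : ι → Matrix m n ℂ}
    (hK : ∑ a, (K a)ᴴ * K a = 1) {ρ σ : Matrix n n ℂ} (hρ : ρ.PosSemidef) (hσ : σ.PosSemidef)
    (hker : LinearMap.ker σ.mulVecLin ≤ LinearMap.ker ρ.mulVecLin) :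
    relEntropy (krausMap K ρ) (krausMap K σ) ≤ relEntropy ρ σ := by
  obtain ⟨P, Q, hac, hsum, hkl, hmax⟩ := exists_nussbaumSzkola hρ hσ hker
  obtain ⟨P', Q', hac', hsum', hkl', hmax'⟩ := exists_nussbaumSzkola
    (posSemidef_krausMap K hρ) (posSemidef_krausMap K hσ) (ker_krausMap_le K hρ hσ hker)
  rw [hkl, hkl']
  refine klSum_le_of_resolventDiv_le hac hac' ?_ fun t ht => ?_
  · rw [hsum, hsum', (trace_krausMap_eq_iff K).2 hK]
  · obtain ⟨Y, hY⟩ := (hmax' t ht).1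
    calc resolventDiv t P' Q'
        = resolventForm t (krausMap K ρ) (krausMap K σ) Y := hY.symm
      _ ≤ resolventForm t ρ σ (krausMap (fun a => (K a)ᴴ) Y) :=
        resolventForm_krausMap_le hK hρ hσ ht.le Y
      _ ≤ resolventDiv t P Q := (hmax t ht).2 ⟨_, rfl⟩

end KrausMap

section Choi

variable {m n : Type*} [Fintype n] [DecidableEq n]

/-- The Choi matrix of `E`, the image under `E ⊗ id` of the unnormalised maximally entangled
state on `n × n`. -/
noncomputable def choiMatrix (E : Matrix n n ℂ →ₗ[ℂ] Matrix m m ℂ) :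
    Matrix (m × n) (m × n) ℂ :=
  of fun x y => E (single x.2 y.2 1) x.1 y.1

theorem exists_eq_krausMap [Fintype m] {E : Matrix n n ℂ →ₗ[ℂ] Matrix m m ℂ}
    (hE : (choiMatrix E).PosSemidef) : ∃ K : m × n → Matrix m n ℂ, E = krausMap K := by
  classical
  obtain ⟨B, hB⟩ := CStarAlgebra.nonneg_iff_eq_star_mul_self.1 hE.nonneg
  refine ⟨fun a => of fun i c => star (B a (i, c)), ext_linearMap _ fun c d => ?_⟩
  ext i j
  have hentry := congr_fun₂ hB (i, c) (j, d)
  simpa [choiMatrix, krausMap_apply, mul_apply, Matrix.sum_apply, single_apply, ite_and]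
    using hentry

lemma posSemidef_choiMatrix {E : Matrix n n ℂ →ₗ[ℂ] Matrix n n ℂ}
    (hE : ∀ M : Matrix (n × n) (n × n) ℂ, M.PosSemidef → (tensorId (fun A => E A) M).PosSemidef) :
    (choiMatrix E).PosSemidef := by
  have hchoi : choiMatrix E = tensorId (fun A => E A)
      (vecMulVec (fun x : n × n => (1 : Matrix n n ℂ) x.1 x.2)
        (star fun x : n × n => (1 : Matrix n n ℂ) x.1 x.2)) := by
    ext x y
    refine congr_fun₂ (congr_arg E ?_) x.1 y.1
    ext c d
    simp [vecMulVec_apply, one_apply, single_apply, ← ite_and, and_comm, eq_comm]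
  rw [hchoi]
  exact hE _ (posSemidef_vecMulVec_self_star _)

end Choi

section Marginals

variable {m k : Type*} [Fintype m] [Fintype k] {d : m × k → ℝ}

lemma eq_zero_of_marginals_mul_eq_zero (hd : ∀ x, 0 ≤ d x) {x : m × k}
    (hx : (∑ b, d (x.1, b)) * ∑ a, d (a, x.2) = 0) : d x = 0 := by
  obtain hleft | hright := mul_eq_zero.1 hx
  · exact (Finset.sum_eq_zero_iff_of_nonneg fun b _ => hd _).1 hleft x.2 (Finset.mem_univ _)
  · exact (Finset.sum_eq_zero_iff_of_nonneg fun a _ => hd _).1 hright x.1 (Finset.mem_univ _)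

lemma sum_mul_log_marginals_mul (hd : ∀ x, 0 ≤ d x) :
    ∑ x, d x * Real.log ((∑ b, d (x.1, b)) * ∑ a, d (a, x.2)) =
      ∑ a, (∑ b, d (a, b)) * Real.log (∑ b, d (a, b)) +
        ∑ b, (∑ a, d (a, b)) * Real.log (∑ a, d (a, b)) := by
  have hlog (x : m × k) : d x * Real.log ((∑ b, d (x.1, b)) * ∑ a, d (a, x.2)) =
      d x * Real.log (∑ b, d (x.1, b)) + d x * Real.log (∑ a, d (a, x.2)) := by
    by_cases hx : d x = 0
    · simp [hx]
    have hprod := mt (eq_zero_of_marginals_mul_eq_zero hd) hx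
    rw [Real.log_mul (left_ne_zero_of_mul hprod) (right_ne_zero_of_mul hprod), mul_add]
  simp only [hlog, Finset.sum_add_distrib]
  rw [Fintype.sum_prod_type, Fintype.sum_prod_type_right]
  simp only [Finset.sum_mul]

end Marginals

section PartialTrace

variable {m m' k k' : Type*} [Fintype m] [Fintype m'] [Fintype k] [Fintype k']

lemma posSemidef_ptrA {M : Matrix (m × k) (m × k) ℂ} (hM : M.PosSemidef) :
    (ptrA M).PosSemidef := by
  have hsum : ptrA M = ∑ b, M.submatrix (·, b) (·, b) := by
    ext
    simp [ptrA, Matrix.sum_apply]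
  exact hsum ▸ posSemidef_sum _ fun b _ => hM.submatrix _

lemma posSemidef_ptrB {M : Matrix (m × k) (m × k) ℂ} (hM : M.PosSemidef) :
    (ptrB M).PosSemidef := by
  have hsum : ptrB M = ∑ a, M.submatrix (a, ·) (a, ·) := by
    ext
    simp [ptrB, Matrix.sum_apply]
  exact hsum ▸ posSemidef_sum _ fun a _ => hM.submatrix _

lemma trace_ptrA_mul [DecidableEq k] (M : Matrix (m × k) (m × k) ℂ) (X : Matrix m m ℂ) :
    (ptrA M * X).trace = (M * (X ⊗ₖ (1 : Matrix k k ℂ))).trace := by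
  simp only [Matrix.trace, diag_apply, mul_apply, ptrA, of_apply, kronecker_apply, one_apply,
    Fintype.sum_prod_type, mul_ite, mul_one, mul_zero, Finset.sum_ite_eq', Finset.mem_univ,
    if_true, Finset.sum_mul]
  exact Finset.sum_congr rfl fun a _ => Finset.sum_comm

lemma trace_ptrB_mul [DecidableEq m] (M : Matrix (m × k) (m × k) ℂ) (X : Matrix k k ℂ) :
    (ptrB M * X).trace = (M * ((1 : Matrix m m ℂ) ⊗ₖ X)).trace := by
  simp only [Matrix.trace, diag_apply, mul_apply, ptrB, of_apply, kronecker_apply, one_apply,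
    Fintype.sum_prod_type_right, ite_mul, mul_ite, one_mul, zero_mul, mul_zero,
    Finset.sum_ite_eq', Finset.mem_univ, if_true, Finset.sum_mul]
  exact Finset.sum_congr rfl fun a _ => Finset.sum_comm

lemma ptrA_conjTranspose_kronecker_mul_mul [DecidableEq k] (V : Matrix m m' ℂ)
    {Z : Matrix k k' ℂ} (hZ : Z * Zᴴ = 1) (M : Matrix (m × k) (m × k) ℂ) :
    ptrA ((V ⊗ₖ Z)ᴴ * M * (V ⊗ₖ Z)) = Vᴴ * ptrA M * V := by
  classical
  refine ext_iff_trace_mul_right.2 fun X => ?_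
  calc (ptrA ((V ⊗ₖ Z)ᴴ * M * (V ⊗ₖ Z)) * X).trace
      = (M * ((V ⊗ₖ Z) * (X ⊗ₖ (1 : Matrix k' k' ℂ)) * (V ⊗ₖ Z)ᴴ)).trace := by
        rw [trace_ptrA_mul, Matrix.mul_assoc, Matrix.mul_assoc, trace_mul_comm]
        simp only [Matrix.mul_assoc]
    _ = (M * ((V * X * Vᴴ) ⊗ₖ (1 : Matrix k k ℂ))).trace := by
        rw [conjTranspose_kronecker, ← mul_kronecker_mul, ← mul_kronecker_mul, Matrix.mul_one, hZ]
    _ = (Vᴴ * ptrA M * V * X).trace := by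
        rw [← trace_ptrA_mul, ← Matrix.mul_assoc, trace_mul_comm]
        simp only [Matrix.mul_assoc]

lemma ptrB_conjTranspose_kronecker_mul_mul [DecidableEq m] {V : Matrix m m' ℂ}
    (hV : V * Vᴴ = 1) (Z : Matrix k k' ℂ) (M : Matrix (m × k) (m × k) ℂ) :
    ptrB ((V ⊗ₖ Z)ᴴ * M * (V ⊗ₖ Z)) = Zᴴ * ptrB M * Z := by
  classical
  refine ext_iff_trace_mul_right.2 fun X => ?_
  calc (ptrB ((V ⊗ₖ Z)ᴴ * M * (V ⊗ₖ Z)) * X).trace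
      = (M * ((V ⊗ₖ Z) * ((1 : Matrix m' m' ℂ) ⊗ₖ X) * (V ⊗ₖ Z)ᴴ)).trace := by
        rw [trace_ptrB_mul, Matrix.mul_assoc, Matrix.mul_assoc, trace_mul_comm]
        simp only [Matrix.mul_assoc]
    _ = (M * ((1 : Matrix m m ℂ) ⊗ₖ (Z * X * Zᴴ))).trace := by
        rw [conjTranspose_kronecker, ← mul_kronecker_mul, ← mul_kronecker_mul, Matrix.mul_one, hV]
    _ = (Zᴴ * ptrB M * Z * X).trace := by
        rw [← trace_ptrB_mul, ← Matrix.mul_assoc, trace_mul_comm]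
        simp only [Matrix.mul_assoc]

end PartialTrace

section ProductOfMarginals

variable {m k : Type*} [Fintype m] [DecidableEq m] [Fintype k] [DecidableEq k]

/-- The tensor product of two unitary matrices. -/
noncomputable def kroneckerUnitary (V : unitaryGroup m ℂ) (Z : unitaryGroup k ℂ) :
    unitaryGroup (m × k) ℂ :=
  ⟨(V : Matrix m m ℂ) ⊗ₖ (Z : Matrix k k ℂ), kronecker_mem_unitary V.2 Z.2⟩

lemma spectralMatrix_kronecker_spectralMatrix (V : unitaryGroup m ℂ) (Z : unitaryGroup k ℂ)
    (s : m → ℝ) (r : k → ℝ) :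
    spectralMatrix V s ⊗ₖ spectralMatrix Z r =
      spectralMatrix (kroneckerUnitary V Z) fun x => s x.1 * r x.2 := by
  simp only [spectralMatrix, kroneckerUnitary, star_eq_conjTranspose, conjTranspose_kronecker,
    Complex.ofReal_mul, mul_kronecker_mul]
  rw [diagonal_kronecker_diagonal]

variable {ρ : Matrix (m × k) (m × k) ℂ}

-- `d` is the outcome distribution of measuring `ρ` in a product of eigenbases of its marginals.
lemma exists_ptr_eq_spectralMatrix_marginal (hρ : ρ.PosSemidef) :
    ∃ (V : unitaryGroup m ℂ) (Z : unitaryGroup k ℂ) (d : m × k → ℝ), (∀ x, 0 ≤ d x) ∧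
      (∀ x, (star (kroneckerUnitary V Z : Matrix (m × k) (m × k) ℂ) * ρ *
        kroneckerUnitary V Z) x x = d x) ∧
      ptrA ρ = spectralMatrix V (fun a => ∑ b, d (a, b)) ∧
      ptrB ρ = spectralMatrix Z (fun b => ∑ a, d (a, b)) := by
  obtain ⟨V, s, -, hA⟩ := exists_eq_spectralMatrix (posSemidef_ptrA hρ)
  obtain ⟨Z, r, -, hB⟩ := exists_eq_spectralMatrix (posSemidef_ptrB hρ)
  set T := (kroneckerUnitary V Z : Matrix (m × k) (m × k) ℂ)
  have hdiag (x : m × k) : 0 ≤ (star T * ρ * T) x x :=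
    (hρ.conjTranspose_mul_mul_same T).diag_nonneg
  have hptrA : ptrA (star T * ρ * T) = diagonal fun a => (s a : ℂ) := by
    rw [← star_mul_spectralMatrix_mul V, ← hA]
    exact ptrA_conjTranspose_kronecker_mul_mul _ (Unitary.coe_mul_star_self Z) ρ
  have hptrB : ptrB (star T * ρ * T) = diagonal fun b => (r b : ℂ) := by
    rw [← star_mul_spectralMatrix_mul Z, ← hB]
    exact ptrB_conjTranspose_kronecker_mul_mul (Unitary.coe_mul_star_self V) _ ρ
  have hs (a : m) : ∑ b, ((star T * ρ * T) (a, b) (a, b)).re = s a := by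
    simpa [ptrA] using congr_arg Complex.re (congr_fun₂ hptrA a a)
  have hr (b : k) : ∑ a, ((star T * ρ * T) (a, b) (a, b)).re = r b := by
    simpa [ptrB] using congr_arg Complex.re (congr_fun₂ hptrB b b)
  refine ⟨V, Z, fun x => ((star T * ρ * T) x x).re, fun x => (Complex.le_def.1 (hdiag x)).1,
    fun x => Complex.eq_re_of_ofReal_le (r := 0) (by simpa using hdiag x), ?_, ?_⟩
  · simp only [hs, hA]
  · simp only [hr, hB]

theorem relEntropy_ptrA_kronecker_ptrB (hρ : ρ.PosSemidef) :
    relEntropy ρ (ptrA ρ ⊗ₖ ptrB ρ) = vnEntropy (ptrA ρ) + vnEntropy (ptrB ρ) - vnEntropy ρ := by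
  obtain ⟨V, Z, d, hd, hdiag, hA, hB⟩ := exists_ptr_eq_spectralMatrix_marginal hρ
  have hcross : (ρ * matLog (ptrA ρ ⊗ₖ ptrB ρ)).trace.re =
      -vnEntropy (ptrA ρ) - vnEntropy (ptrB ρ) := by
    rw [hA, hB, spectralMatrix_kronecker_spectralMatrix, matLog_spectralMatrix,
      re_trace_mul_spectralMatrix, vnEntropy, vnEntropy, re_trace_spectralMatrix_mul_matLog,
      re_trace_spectralMatrix_mul_matLog, neg_neg, sub_neg_eq_add, ← sum_mul_log_marginals_mul hd]
    simp only [hdiag, Complex.ofReal_re, Function.comp_apply]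
  have hself : (ρ * matLog ρ).trace.re = -vnEntropy ρ := (neg_neg _).symm
  rw [relEntropy, Matrix.mul_sub, trace_sub, Complex.sub_re, hself, hcross]
  ring

end ProductOfMarginals

lemma ker_ptrA_kronecker_ptrB_le {m k : Type*} [Fintype m] [Fintype k]
    {ρ : Matrix (m × k) (m × k) ℂ} (hρ : ρ.PosSemidef) :
    LinearMap.ker (ptrA ρ ⊗ₖ ptrB ρ).mulVecLin ≤ LinearMap.ker ρ.mulVecLin := by
  classical
  obtain ⟨V, Z, d, hd, hdiag, hA, hB⟩ := exists_ptr_eq_spectralMatrix_marginal hρ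
  rw [hA, hB, spectralMatrix_kronecker_spectralMatrix, ker_spectralMatrix_le_ker_iff hρ]
  intro x hx
  rw [hdiag, eq_zero_of_marginals_mul_eq_zero hd hx, Complex.ofReal_zero]

section LocalMap

variable {m k ι : Type*} [Fintype m] [Fintype k] [Fintype ι]

lemma tensorId_krausMap [DecidableEq k] (K : ι → Matrix m m ℂ) (M : Matrix (m × k) (m × k) ℂ) :
    tensorId (fun A => krausMap K A) M =
      krausMap (fun a => K a ⊗ₖ (1 : Matrix k k ℂ)) M := by
  ext
  simp [tensorId, krausMap_apply, Matrix.sum_apply, mul_apply, Fintype.sum_prod_type, one_apply,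
    apply_ite]

lemma sum_conjTranspose_kronecker_one_mul [DecidableEq m] [DecidableEq k] {K : ι → Matrix m m ℂ}
    (hK : ∑ a, (K a)ᴴ * K a = 1) :
    ∑ a, (K a ⊗ₖ (1 : Matrix k k ℂ))ᴴ * (K a ⊗ₖ (1 : Matrix k k ℂ)) = 1 := by
  simp only [conjTranspose_kronecker, conjTranspose_one, ← mul_kronecker_mul, Matrix.mul_one]
  rw [← one_kronecker_one, ← hK]
  ext
  simp [Matrix.sum_apply, Finset.sum_mul]

lemma tensorId_kronecker (E : Matrix m m ℂ →ₗ[ℂ] Matrix m m ℂ) (A : Matrix m m ℂ)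
    (B : Matrix k k ℂ) : tensorId (fun A => E A) (A ⊗ₖ B) = E A ⊗ₖ B := by
  ext x y
  have hblock : (of fun a c => (A ⊗ₖ B) (a, x.2) (c, y.2)) = B x.2 y.2 • A := by
    ext
    simp [mul_comm]
  rw [tensorId, of_apply, hblock, map_smul, Matrix.smul_apply, smul_eq_mul, mul_comm,
    kronecker_apply]

lemma ptrA_tensorId (E : Matrix m m ℂ →ₗ[ℂ] Matrix m m ℂ) (M : Matrix (m × k) (m × k) ℂ) :
    ptrA (tensorId (fun A => E A) M) = E (ptrA M) := by
  have hsum : ptrA M = ∑ b, of fun a c => M (a, b) (c, b) := by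
    ext
    simp [ptrA, Matrix.sum_apply]
  rw [hsum, map_sum]
  ext
  simp [ptrA, tensorId, Matrix.sum_apply]

lemma ptrB_tensorId {E : Matrix m m ℂ →ₗ[ℂ] Matrix m m ℂ} (htr : ∀ A, (E A).trace = A.trace)
    (M : Matrix (m × k) (m × k) ℂ) : ptrB (tensorId (fun A => E A) M) = ptrB M := by
  ext x y
  exact htr (of fun a c => M (a, x) (c, y))

end LocalMap

theorem mutInfo_monotone_local_cptp_general {m k : Type*} [Fintype m] [DecidableEq m] [Fintype k]
    [DecidableEq k] (E : Matrix m m ℂ →ₗ[ℂ] Matrix m m ℂ) (htr : ∀ A, (E A).trace = A.trace)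
    (hCP : ∀ M : Matrix (m × m) (m × m) ℂ, M.PosSemidef → (tensorId (fun A => E A) M).PosSemidef)
    (ρ : Matrix (m × k) (m × k) ℂ) (hρ : ρ.PosSemidef) :
    vnEntropy (ptrA (tensorId (fun A => E A) ρ)) + vnEntropy (ptrB (tensorId (fun A => E A) ρ)) -
        vnEntropy (tensorId (fun A => E A) ρ) ≤
      vnEntropy (ptrA ρ) + vnEntropy (ptrB ρ) - vnEntropy ρ := by
  obtain ⟨K, rfl⟩ := exists_eq_krausMap (posSemidef_choiMatrix hCP)
  have hK := sum_conjTranspose_kronecker_one_mul (k := k) ((trace_krausMap_eq_iff K).1 htr)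
  have hEρ : (tensorId (fun A => krausMap K A) ρ).PosSemidef :=
    tensorId_krausMap K ρ ▸ posSemidef_krausMap _ hρ
  have hσ : (ptrA ρ ⊗ₖ ptrB ρ).PosSemidef := (posSemidef_ptrA hρ).kronecker (posSemidef_ptrB hρ)
  rw [← relEntropy_ptrA_kronecker_ptrB hρ, ← relEntropy_ptrA_kronecker_ptrB hEρ, ptrA_tensorId,
    ptrB_tensorId htr, ← tensorId_kronecker, tensorId_krausMap, tensorId_krausMap]
  exact relEntropy_krausMap_le hK hρ hσ (ker_ptrA_kronecker_ptrB_le hρ)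

/-- Quantum mutual information is monotonically nonincreasing under local
trace-preserving completely positive maps on the system. -/
theorem mutInfo_monotone_local_cptp {m k : ℕ}
    (E : Matrix (Fin m) (Fin m) ℂ →ₗ[ℂ] Matrix (Fin m) (Fin m) ℂ)
    (htr : ∀ A : Matrix (Fin m) (Fin m) ℂ, (E A).trace = A.trace)
    (hCP : ∀ (l : ℕ) (M : Matrix (Fin m × Fin l) (Fin m × Fin l) ℂ),
      M.PosSemidef → (tensorId (fun A => E A) M).PosSemidef)
    (ρ : Matrix (Fin m × Fin k) (Fin m × Fin k) ℂ)
    (hρ : ρ.PosSemidef) (hρtr : ρ.trace = 1) :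
    mutInfo (tensorId (fun A => E A) ρ) ≤ mutInfo ρ := by
  exact mutInfo_monotone_local_cptp_general E htr (hCP m) ρ hρ
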